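/- Fix x₀ > 0 and L > 3x₀ and let H, θ, λ be the associated critical data. Let μ > μ₀ := −x₀/(L+x₀) + 2√(x₀/(L+x₀)), and set α = (1/2)√(μ + x₀/(L+x₀) + 2√(x₀/(L+x₀))) and γ = (1/2)√(μ + x₀/(L+x₀) − 2√(x₀/(L+x₀))). Then the four functions u₁(s) = sin((α−γ)θ(s)), u₂(s) = sin((α+γ)θ(s)), u₃(s) = cos((α−γ)θ(s)), u₄(s) = cos((α+γ)θ(s)) each satisfy (d²/ds²)(2H⁻³·ü) + μ·(d/ds)(2H⁻¹·u̇) + (2−λ)Hu = 0 on (0,2L), and they are linearly independent as functions on [0,2L]. -/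

import Mathlib

open Real Set

noncomputable def sig (x0 L : ℝ) : ℝ := π * Real.sqrt (x0 / (L + x0))

noncomputable def kap (x0 L : ℝ) : ℝ := L / Real.sin (sig x0 L)

noncomputable def Hc (x0 L s : ℝ) : ℝ :=
  π / (sig x0 L * Real.sqrt (kap x0 L ^ 2 - (s - L) ^ 2))

/-- the angle function `θ(s) = (π/σ)(arcsin((s−L)/κ) + σ)` -/
noncomputable def th (x0 L s : ℝ) : ℝ :=
  π / sig x0 L * (Real.arcsin ((s - L) / kap x0 L) + sig x0 L)

/-- the fourth order operator `Lu = (2H⁻³ü)'' + μ(2H⁻¹u̇)' + (2−λ)Hu`,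
with `λ = 2L/(L+x₀)` -/
noncomputable def Lop (x0 L μ : ℝ) (u : ℝ → ℝ) (s : ℝ) : ℝ :=
  deriv (deriv fun t => 2 / Hc x0 L t ^ 3 * deriv (deriv u) t) s +
    μ * deriv (fun t => 2 / Hc x0 L t * deriv u t) s +
    (2 - 2 * L / (L + x0)) * Hc x0 L s * u s

/-- `α = (1/2)√(μ + x₀/(L+x₀) + 2√(x₀/(L+x₀)))` -/
noncomputable def alph (x0 L μ : ℝ) : ℝ :=
  1 / 2 * Real.sqrt (μ + x0 / (L + x0) + 2 * Real.sqrt (x0 / (L + x0)))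

/-- `γ = (1/2)√(μ + x₀/(L+x₀) − 2√(x₀/(L+x₀)))` -/
noncomputable def gamm (x0 L μ : ℝ) : ℝ :=
  1 / 2 * Real.sqrt (μ + x0 / (L + x0) - 2 * Real.sqrt (x0 / (L + x0)))

/-!
In the variable `θ` the operator has constant coefficients. Writing `q = x₀/(L+x₀)`, one has
`θ' = H`, `H' = q (s - L) H³` and `2 - λ = 2q`, and the terms containing `s - L` cancel:
`L(f ∘ θ) = 2H (f⁗ + (μ + q) f″ + q f) ∘ θ`. An oscillation of frequency `m` is therefore a solution
as soon as `m⁴ - (μ + q) m² + q = 0`, and the roots of this biquadratic are `±(α - γ)`, `±(α + γ)`.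
For `μ > μ₀` the two frequencies are nonzero with distinct squares, so that oscillations with these
frequencies are independent on every interval; and `θ` maps `[0, 2L]` onto a nondegenerate interval.
-/

section ChangeOfVariable

variable {θ H f : ℝ → ℝ} {U : Set ℝ} {q c : ℝ}

lemma hasDerivAt_iteratedDeriv_comp {n : WithTop ℕ∞} {k : ℕ} {θ' s : ℝ} (hf : ContDiff ℝ n f)
    (hk : k < n) (hθ : HasDerivAt θ θ' s) :
    HasDerivAt (fun r => iteratedDeriv k f (θ r)) (iteratedDeriv (k + 1) f (θ s) * θ') s := by
  have hderiv := (hf.differentiable_iteratedDeriv k hk (θ s)).hasDerivAt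
  rw [← iteratedDeriv_succ] at hderiv
  exact hderiv.comp s hθ

lemma eqOn_deriv_comp (hf : ContDiff ℝ 1 f) (hθ : ∀ s ∈ U, HasDerivAt θ (H s) s) :
    EqOn (deriv fun r => f (θ r)) (fun s => iteratedDeriv 1 f (θ s) * H s) U := fun s hs => by
  simpa only [iteratedDeriv_zero] using
    (hasDerivAt_iteratedDeriv_comp (k := 0) hf (by norm_num) (hθ s hs)).deriv

lemma eqOn_deriv_two_div_mul_deriv_comp (hU : IsOpen U) (hf : ContDiff ℝ 2 f)
    (hθ : ∀ s ∈ U, HasDerivAt θ (H s) s) (hH₀ : ∀ s ∈ U, H s ≠ 0) :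
    EqOn (deriv fun t => 2 / H t * deriv (fun r => f (θ r)) t)
      (fun s => 2 * iteratedDeriv 2 f (θ s) * H s) U := by
  have hflux : EqOn (fun t => 2 / H t * deriv (fun r => f (θ r)) t)
      (fun t => 2 * iteratedDeriv 1 f (θ t)) U := fun t ht => by
    have := hH₀ t ht
    simp only [eqOn_deriv_comp (hf.of_le (by norm_num)) hθ ht]
    field_simp
  intro s hs
  rw [hflux.deriv hU hs,
    ((hasDerivAt_iteratedDeriv_comp hf (by norm_num) (hθ s hs)).const_mul 2).deriv]
  ring

lemma eqOn_deriv_deriv_comp (hU : IsOpen U) (hf : ContDiff ℝ 2 f)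
    (hθ : ∀ s ∈ U, HasDerivAt θ (H s) s)
    (hH : ∀ s ∈ U, HasDerivAt H (q * (s - c) * H s ^ 3) s) :
    EqOn (deriv (deriv fun r => f (θ r)))
      (fun s => iteratedDeriv 2 f (θ s) * H s ^ 2 +
        iteratedDeriv 1 f (θ s) * (q * (s - c) * H s ^ 3)) U := by
  intro s hs
  rw [(eqOn_deriv_comp (hf.of_le (by norm_num)) hθ).deriv hU hs,
    ((hasDerivAt_iteratedDeriv_comp hf (by norm_num) (hθ s hs)).fun_mul (hH s hs)).deriv]
  ring

lemma eqOn_deriv_two_div_cube_mul_deriv_deriv_comp (hU : IsOpen U) (hf : ContDiff ℝ 3 f)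
    (hθ : ∀ s ∈ U, HasDerivAt θ (H s) s)
    (hH : ∀ s ∈ U, HasDerivAt H (q * (s - c) * H s ^ 3) s) (hH₀ : ∀ s ∈ U, H s ≠ 0) :
    EqOn (deriv fun t => 2 / H t ^ 3 * deriv (deriv fun r => f (θ r)) t)
      (fun s => 2 * (iteratedDeriv 3 f (θ s) + q * iteratedDeriv 1 f (θ s))) U := by
  have hmoment : EqOn (fun t => 2 / H t ^ 3 * deriv (deriv fun r => f (θ r)) t)
      (fun t => 2 * (iteratedDeriv 2 f (θ t) / H t + q * ((t - c) * iteratedDeriv 1 f (θ t))))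
      U := fun t ht => by
    have := hH₀ t ht
    simp only [eqOn_deriv_deriv_comp hU (hf.of_le (by norm_num)) hθ hH ht]
    field_simp
  intro s hs
  have := hH₀ s hs
  have hf₁ := hasDerivAt_iteratedDeriv_comp (k := 1) hf (by norm_num) (hθ s hs)
  have hf₂ := hasDerivAt_iteratedDeriv_comp (k := 2) hf (by norm_num) (hθ s hs)
  have hsub := (hasDerivAt_id' s).sub_const c
  rw [hmoment.deriv hU hs, (((hf₂.fun_div (hH s hs) this).fun_add
    ((hsub.fun_mul hf₁).const_mul q)).const_mul 2).deriv]
  field_simp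
  ring

lemma eqOn_deriv_deriv_two_div_cube_mul_deriv_deriv_comp (hU : IsOpen U) (hf : ContDiff ℝ 4 f)
    (hθ : ∀ s ∈ U, HasDerivAt θ (H s) s)
    (hH : ∀ s ∈ U, HasDerivAt H (q * (s - c) * H s ^ 3) s) (hH₀ : ∀ s ∈ U, H s ≠ 0) :
    EqOn (deriv (deriv fun t => 2 / H t ^ 3 * deriv (deriv fun r => f (θ r)) t))
      (fun s => 2 * (iteratedDeriv 4 f (θ s) + q * iteratedDeriv 2 f (θ s)) * H s) U := by
  intro s hs
  have hf₁ := hasDerivAt_iteratedDeriv_comp (k := 1) hf (by norm_num) (hθ s hs)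
  have hf₃ := hasDerivAt_iteratedDeriv_comp (k := 3) hf (by norm_num) (hθ s hs)
  rw [(eqOn_deriv_two_div_cube_mul_deriv_deriv_comp hU (hf.of_le (by norm_num)) hθ hH
    hH₀).deriv hU hs, ((hf₃.fun_add (hf₁.const_mul q)).const_mul 2).deriv]
  ring

end ChangeOfVariable

section Sinusoid

/-- The general oscillation `t ↦ a sin(ωt) + b cos(ωt)` of frequency `ω`; keeping both amplitudes
makes the family closed under differentiation. -/
noncomputable def sinusoid (ω a b t : ℝ) : ℝ := a * sin (ω * t) + b * cos (ω * t)

variable {ω ν a b c d t : ℝ}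

@[fun_prop]
lemma contDiff_sinusoid {n : WithTop ℕ∞} : ContDiff ℝ n (sinusoid ω a b) := by
  unfold sinusoid
  fun_prop

lemma deriv_sinusoid : deriv (sinusoid ω a b) = sinusoid ω (-(ω * b)) (ω * a) := by
  ext t
  have hlin : HasDerivAt (fun r => ω * r) ω t := by
    simpa only [mul_one] using (hasDerivAt_id' t).const_mul ω
  refine ((hlin.sin.const_mul a).fun_add (hlin.cos.const_mul b)).deriv.trans ?_
  unfold sinusoid
  ring

lemma iteratedDeriv_two_sinusoid :
    iteratedDeriv 2 (sinusoid ω a b) = fun t => -ω ^ 2 * sinusoid ω a b t := by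
  ext t
  simp only [iteratedDeriv_succ', iteratedDeriv_zero, deriv_sinusoid, sinusoid]
  ring

lemma iteratedDeriv_four_sinusoid :
    iteratedDeriv 4 (sinusoid ω a b) = fun t => ω ^ 4 * sinusoid ω a b t := by
  ext t
  simp only [iteratedDeriv_succ', iteratedDeriv_zero, deriv_sinusoid, sinusoid]
  ring

open Filter Topology

lemma eq_zero_of_sinusoid_eventuallyEq_zero (hω : ω ≠ 0) (h : sinusoid ω a b =ᶠ[𝓝 t] 0) :
    a = 0 ∧ b = 0 := by
  have hvalue : a * sin (ω * t) + b * cos (ω * t) = 0 := h.eq_of_nhds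
  have hslope : a * cos (ω * t) - b * sin (ω * t) = 0 := by
    have hderiv := h.deriv_eq
    simp only [deriv_sinusoid, deriv_zero, sinusoid, Pi.zero_apply] at hderiv
    refine mul_left_cancel₀ hω ?_
    linear_combination hderiv
  have hpyth := sin_sq_add_cos_sq (ω * t)
  constructor
  · linear_combination sin (ω * t) * hvalue + cos (ω * t) * hslope - a * hpyth
  · linear_combination cos (ω * t) * hvalue - sin (ω * t) * hslope - b * hpyth

lemma sinusoid_eq_zero_of_add_eventuallyEq_zero (hων : ω ^ 2 ≠ ν ^ 2)
    (h : (fun r => sinusoid ω a b r + sinusoid ν c d r) =ᶠ[𝓝 t] 0) : sinusoid ω a b t = 0 := by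
  have hvalue : sinusoid ω a b t + sinusoid ν c d t = 0 := h.eq_of_nhds
  have hsecond : -ω ^ 2 * sinusoid ω a b t + -ν ^ 2 * sinusoid ν c d t = 0 := by
    have hderiv := h.iteratedDeriv_eq 2
    rw [iteratedDeriv_fun_add (by fun_prop) (by fun_prop), iteratedDeriv_two_sinusoid,
      iteratedDeriv_two_sinusoid] at hderiv
    simpa using hderiv
  refine mul_left_cancel₀ (sub_ne_zero.2 hων.symm) ?_
  linear_combination ν ^ 2 * hvalue + hsecond

lemma eq_zero_of_sinusoid_add_sinusoid_eqOn_zero {U : Set ℝ} (hU : IsOpen U) (hU' : U.Nonempty)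
    (hω : ω ≠ 0) (hν : ν ≠ 0) (hων : ω ^ 2 ≠ ν ^ 2)
    (h : EqOn (fun r => sinusoid ω a b r + sinusoid ν c d r) 0 U) :
    (a = 0 ∧ b = 0) ∧ c = 0 ∧ d = 0 := by
  obtain ⟨t, ht⟩ := hU'
  have hfirst : EqOn (sinusoid ω a b) 0 U := fun r hr =>
    sinusoid_eq_zero_of_add_eventuallyEq_zero hων (h.eventuallyEq_of_mem (hU.mem_nhds hr))
  have hsecond : EqOn (sinusoid ν c d) 0 U := fun r hr => by
    simpa [hfirst hr] using h hr
  exact ⟨eq_zero_of_sinusoid_eventuallyEq_zero hω (hfirst.eventuallyEq_of_mem (hU.mem_nhds ht)),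
    eq_zero_of_sinusoid_eventuallyEq_zero hν (hsecond.eventuallyEq_of_mem (hU.mem_nhds ht))⟩

end Sinusoid

section SqrtSqSubSq

variable {κ c s : ℝ}

lemma hasDerivAt_arcsin_sub_div (hκ : 0 < κ) (hs : 0 < κ ^ 2 - (s - c) ^ 2) :
    HasDerivAt (fun r => arcsin ((r - c) / κ)) (1 / √(κ ^ 2 - (s - c) ^ 2)) s := by
  have hlt : |(s - c) / κ| < 1 := by
    rw [abs_div, abs_of_pos hκ, div_lt_one hκ]
    exact abs_lt_of_sq_lt_sq (by linarith) hκ.le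
  have hrescale : 1 - ((s - c) / κ) ^ 2 = (κ ^ 2 - (s - c) ^ 2) / κ ^ 2 := by field_simp
  have hlin : HasDerivAt (fun r => (r - c) / κ) (1 / κ) s :=
    ((hasDerivAt_id' s).sub_const c).div_const κ
  refine ((hasDerivAt_arcsin (abs_lt.1 hlt).1.ne' (abs_lt.1 hlt).2.ne).comp s hlin).congr_deriv ?_
  rw [hrescale, sqrt_div hs.le, sqrt_sq hκ.le]
  field_simp

lemma hasDerivAt_one_div_sqrt_sq_sub_sq (hs : 0 < κ ^ 2 - (s - c) ^ 2) :
    HasDerivAt (fun r => 1 / √(κ ^ 2 - (r - c) ^ 2))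
      ((s - c) * (1 / √(κ ^ 2 - (s - c) ^ 2)) ^ 3) s := by
  have hroot := sqrt_pos.2 hs
  have hquad : HasDerivAt (fun r => κ ^ 2 - (r - c) ^ 2) (-(2 * (s - c))) s := by
    simpa using (((hasDerivAt_id' s).sub_const c).fun_pow 2).const_sub (κ ^ 2)
  refine ((hasDerivAt_const s 1).fun_div (hquad.sqrt hs.ne') hroot.ne').congr_deriv ?_
  field_simp
  ring

end SqrtSqSubSq

section CriticalData

variable {x0 L s : ℝ}

lemma sig_pos (hx0 : 0 < x0) (hL : 0 < L) : 0 < sig x0 L := by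
  unfold sig
  positivity

lemma sig_lt_pi (hx0 : 0 < x0) (hL : 0 < L) : sig x0 L < π := by
  have hratio : x0 / (L + x0) < 1 := (div_lt_one (by positivity)).2 (by linarith)
  exact mul_lt_of_lt_one_right pi_pos ((sqrt_lt' one_pos).2 (by simpa using hratio))

lemma sig_sq (hx0 : 0 ≤ x0) (hL : 0 ≤ L) : sig x0 L ^ 2 = π ^ 2 * (x0 / (L + x0)) := by
  rw [sig, mul_pow, sq_sqrt (by positivity)]

lemma le_kap (hx0 : 0 < x0) (hL : 0 < L) : L ≤ kap x0 L :=
  le_div_self hL.le (sin_pos_of_pos_of_lt_pi (sig_pos hx0 hL) (sig_lt_pi hx0 hL)) (sin_le_one _)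

lemma kap_pos (hx0 : 0 < x0) (hL : 0 < L) : 0 < kap x0 L := hL.trans_le (le_kap hx0 hL)

lemma kap_sq_sub_sq_pos (hx0 : 0 < x0) (hs : s ∈ Ioo 0 (2 * L)) :
    0 < kap x0 L ^ 2 - (s - L) ^ 2 := by
  have hL : 0 < L := by linarith [hs.1, hs.2]
  have hkap := le_kap hx0 hL
  exact sub_pos.2 (sq_lt_sq' (by linarith [hs.1]) (by linarith [hs.2]))

lemma Hc_eq_mul_one_div_sqrt :
    Hc x0 L = fun s => π / sig x0 L * (1 / √(kap x0 L ^ 2 - (s - L) ^ 2)) := by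
  ext s
  rw [Hc, div_mul_div_comm, mul_one]

lemma Hc_pos (hx0 : 0 < x0) (hs : s ∈ Ioo 0 (2 * L)) : 0 < Hc x0 L s := by
  have hsig := sig_pos (L := L) hx0 (by linarith [hs.1, hs.2])
  have hroot := sqrt_pos.2 (kap_sq_sub_sq_pos hx0 hs)
  unfold Hc
  positivity

lemma hasDerivAt_th (hx0 : 0 < x0) (hs : s ∈ Ioo 0 (2 * L)) :
    HasDerivAt (th x0 L) (Hc x0 L s) s := by
  have hkap : 0 < kap x0 L := kap_pos hx0 (by linarith [hs.1, hs.2])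
  rw [Hc_eq_mul_one_div_sqrt]
  exact ((hasDerivAt_arcsin_sub_div hkap (kap_sq_sub_sq_pos hx0 hs)).add_const _).const_mul _

lemma hasDerivAt_Hc (hx0 : 0 < x0) (hs : s ∈ Ioo 0 (2 * L)) :
    HasDerivAt (Hc x0 L) (x0 / (L + x0) * (s - L) * Hc x0 L s ^ 3) s := by
  have hL : 0 < L := by linarith [hs.1, hs.2]
  have hsig := sig_pos hx0 hL
  have hratio : x0 / (L + x0) = sig x0 L ^ 2 / π ^ 2 := by
    rw [sig_sq hx0.le hL.le, mul_div_cancel_left₀ _ (by positivity)]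
  rw [Hc_eq_mul_one_div_sqrt, hratio]
  refine ((hasDerivAt_one_div_sqrt_sq_sub_sq (kap_sq_sub_sq_pos hx0 hs)).const_mul
    (π / sig x0 L)).congr_deriv ?_
  field_simp

lemma continuous_th : Continuous (th x0 L) := by
  unfold th
  fun_prop

lemma strictMonoOn_th (hx0 : 0 < x0) : StrictMonoOn (th x0 L) (Icc 0 (2 * L)) := by
  refine strictMonoOn_of_deriv_pos (convex_Icc 0 (2 * L)) continuous_th.continuousOn fun s hs => ?_
  rw [interior_Icc] at hs
  rw [(hasDerivAt_th hx0 hs).deriv]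
  exact Hc_pos hx0 hs

end CriticalData

section StabilityEquation

variable {x0 L μ : ℝ}

lemma Lop_comp_th {f : ℝ → ℝ} {s : ℝ} (hx0 : 0 < x0) (hf : ContDiff ℝ 4 f)
    (hs : s ∈ Ioo 0 (2 * L)) :
    Lop x0 L μ (fun r => f (th x0 L r)) s =
      2 * Hc x0 L s * (iteratedDeriv 4 f (th x0 L s) +
        (μ + x0 / (L + x0)) * iteratedDeriv 2 f (th x0 L s) +
        x0 / (L + x0) * f (th x0 L s)) := by
  have hθ : ∀ r ∈ Ioo 0 (2 * L), HasDerivAt (th x0 L) (Hc x0 L r) r :=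
    fun r hr => hasDerivAt_th hx0 hr
  have hH₀ : ∀ r ∈ Ioo 0 (2 * L), Hc x0 L r ≠ 0 := fun r hr => (Hc_pos hx0 hr).ne'
  have hzeroth : 2 - 2 * L / (L + x0) = 2 * (x0 / (L + x0)) := by
    have : L + x0 ≠ 0 := by linarith [hs.1, hs.2]
    field_simp
    ring
  rw [Lop, eqOn_deriv_deriv_two_div_cube_mul_deriv_deriv_comp isOpen_Ioo hf hθ
      (fun r hr => hasDerivAt_Hc hx0 hr) hH₀ hs,
    eqOn_deriv_two_div_mul_deriv_comp isOpen_Ioo (hf.of_le (by norm_num)) hθ hH₀ hs, hzeroth]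
  ring

lemma Lop_sinusoid_th_eq_zero {m s : ℝ} (hx0 : 0 < x0)
    (hm : m ^ 4 - (μ + x0 / (L + x0)) * m ^ 2 + x0 / (L + x0) = 0) (a b : ℝ)
    (hs : s ∈ Ioo 0 (2 * L)) :
    Lop x0 L μ (fun r => sinusoid m a b (th x0 L r)) s = 0 := by
  rw [Lop_comp_th hx0 contDiff_sinusoid hs, iteratedDeriv_four_sinusoid,
    iteratedDeriv_two_sinusoid]
  linear_combination 2 * Hc x0 L s * sinusoid m a b (th x0 L s) * hm

lemma Lop_sin_th_eq_zero {m s : ℝ} (hx0 : 0 < x0)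
    (hm : m ^ 4 - (μ + x0 / (L + x0)) * m ^ 2 + x0 / (L + x0) = 0) (hs : s ∈ Ioo 0 (2 * L)) :
    Lop x0 L μ (fun r => sin (m * th x0 L r)) s = 0 := by
  simpa [sinusoid] using Lop_sinusoid_th_eq_zero hx0 hm 1 0 hs

lemma Lop_cos_th_eq_zero {m s : ℝ} (hx0 : 0 < x0)
    (hm : m ^ 4 - (μ + x0 / (L + x0)) * m ^ 2 + x0 / (L + x0) = 0) (hs : s ∈ Ioo 0 (2 * L)) :
    Lop x0 L μ (fun r => cos (m * th x0 L r)) s = 0 := by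
  simpa [sinusoid] using Lop_sinusoid_th_eq_zero hx0 hm 0 1 hs

lemma eq_zero_of_sinusoid_th_add_sinusoid_th_eqOn_zero {ω ν a b c d : ℝ} (hx0 : 0 < x0)
    (hL : 0 < L) (hω : ω ≠ 0) (hν : ν ≠ 0) (hων : ω ^ 2 ≠ ν ^ 2)
    (h : ∀ s ∈ Icc 0 (2 * L), sinusoid ω a b (th x0 L s) + sinusoid ν c d (th x0 L s) = 0) :
    (a = 0 ∧ b = 0) ∧ c = 0 ∧ d = 0 := by
  have h2L : 0 < 2 * L := by positivity
  have hrange : th x0 L 0 < th x0 L (2 * L) :=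
    strictMonoOn_th hx0 (left_mem_Icc.2 h2L.le) (right_mem_Icc.2 h2L.le) h2L
  refine eq_zero_of_sinusoid_add_sinusoid_eqOn_zero isOpen_Ioo (nonempty_Ioo.2 hrange) hω hν hων
    fun t ht => ?_
  obtain ⟨s, hs, rfl⟩ :=
    intermediate_value_Icc h2L.le continuous_th.continuousOn (Ioo_subset_Icc_self ht)
  exact h s hs

end StabilityEquation

section Frequencies

variable {x0 L μ : ℝ}

lemma alph_sq (hμ : 0 ≤ μ + x0 / (L + x0) + 2 * √(x0 / (L + x0))) :
    alph x0 L μ ^ 2 = (μ + x0 / (L + x0) + 2 * √(x0 / (L + x0))) / 4 := by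
  rw [alph, mul_pow, sq_sqrt hμ]
  ring

lemma gamm_sq (hμ : 0 ≤ μ + x0 / (L + x0) - 2 * √(x0 / (L + x0))) :
    gamm x0 L μ ^ 2 = (μ + x0 / (L + x0) - 2 * √(x0 / (L + x0))) / 4 := by
  rw [gamm, mul_pow, sq_sqrt hμ]
  ring

lemma biquadratic_eq_mul (hq : 0 ≤ x0 / (L + x0))
    (hμ : 2 * √(x0 / (L + x0)) ≤ μ + x0 / (L + x0)) (m : ℝ) :
    m ^ 4 - (μ + x0 / (L + x0)) * m ^ 2 + x0 / (L + x0) =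
      (m ^ 2 - (alph x0 L μ - gamm x0 L μ) ^ 2) * (m ^ 2 - (alph x0 L μ + gamm x0 L μ) ^ 2) := by
  have hroot := sqrt_nonneg (x0 / (L + x0))
  have hα := alph_sq (x0 := x0) (L := L) (μ := μ) (by linarith)
  have hγ := gamm_sq (sub_nonneg.2 hμ)
  have hsum : 2 * (alph x0 L μ ^ 2 + gamm x0 L μ ^ 2) = μ + x0 / (L + x0) := by
    rw [hα, hγ]
    ring
  have hprod : (alph x0 L μ ^ 2 - gamm x0 L μ ^ 2) ^ 2 = x0 / (L + x0) := by
    rw [hα, hγ]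
    linear_combination sq_sqrt hq
  linear_combination m ^ 2 * hsum - hprod

lemma gamm_pos (hμ : 2 * √(x0 / (L + x0)) < μ + x0 / (L + x0)) : 0 < gamm x0 L μ :=
  mul_pos one_half_pos (sqrt_pos.2 (by linarith))

lemma gamm_lt_alph (hq : 0 < x0 / (L + x0))
    (hμ : 2 * √(x0 / (L + x0)) ≤ μ + x0 / (L + x0)) : gamm x0 L μ < alph x0 L μ := by
  have hroot := sqrt_pos.2 hq
  exact mul_lt_mul_of_pos_left (sqrt_lt_sqrt (by linarith) (by linarith)) one_half_pos

end Frequencies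

theorem statement15_general (x0 L μ : ℝ) (hx0 : 0 < x0) (hL : 0 < L)
    (hμ : -(x0 / (L + x0)) + 2 * Real.sqrt (x0 / (L + x0)) < μ) :
    (∀ s ∈ Set.Ioo (0:ℝ) (2 * L),
        Lop x0 L μ (fun r => Real.sin ((alph x0 L μ - gamm x0 L μ) * th x0 L r)) s = 0) ∧
    (∀ s ∈ Set.Ioo (0:ℝ) (2 * L),
        Lop x0 L μ (fun r => Real.sin ((alph x0 L μ + gamm x0 L μ) * th x0 L r)) s = 0) ∧
    (∀ s ∈ Set.Ioo (0:ℝ) (2 * L),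
        Lop x0 L μ (fun r => Real.cos ((alph x0 L μ - gamm x0 L μ) * th x0 L r)) s = 0) ∧
    (∀ s ∈ Set.Ioo (0:ℝ) (2 * L),
        Lop x0 L μ (fun r => Real.cos ((alph x0 L μ + gamm x0 L μ) * th x0 L r)) s = 0) ∧
    ∀ a b c d : ℝ,
      (∀ s ∈ Set.Icc (0:ℝ) (2 * L),
          a * Real.sin ((alph x0 L μ - gamm x0 L μ) * th x0 L s) +
            b * Real.sin ((alph x0 L μ + gamm x0 L μ) * th x0 L s) +
            c * Real.cos ((alph x0 L μ - gamm x0 L μ) * th x0 L s) +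
            d * Real.cos ((alph x0 L μ + gamm x0 L μ) * th x0 L s) = 0) →
      a = 0 ∧ b = 0 ∧ c = 0 ∧ d = 0 := by
  have hq : 0 < x0 / (L + x0) := by positivity
  have hμ' : 2 * √(x0 / (L + x0)) < μ + x0 / (L + x0) := by linarith
  have hγ := gamm_pos hμ'
  have hγα := gamm_lt_alph hq hμ'.le
  have hroot_sub := biquadratic_eq_mul hq.le hμ'.le (alph x0 L μ - gamm x0 L μ)
  have hroot_add := biquadratic_eq_mul hq.le hμ'.le (alph x0 L μ + gamm x0 L μ)
  rw [sub_self, zero_mul] at hroot_sub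
  rw [sub_self, mul_zero] at hroot_add
  refine ⟨fun s => Lop_sin_th_eq_zero hx0 hroot_sub, fun s => Lop_sin_th_eq_zero hx0 hroot_add,
    fun s => Lop_cos_th_eq_zero hx0 hroot_sub, fun s => Lop_cos_th_eq_zero hx0 hroot_add,
    fun a b c d h => ?_⟩
  obtain ⟨⟨ha, hc⟩, hb, hd⟩ := eq_zero_of_sinusoid_th_add_sinusoid_th_eqOn_zero
    (ω := alph x0 L μ - gamm x0 L μ) (ν := alph x0 L μ + gamm x0 L μ)
    (a := a) (b := c) (c := b) (d := d) hx0 hL (by linarith) (by linarith)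
    (sq_lt_sq' (by linarith) (by linarith)).ne
    fun s hs => by unfold sinusoid; linear_combination h s hs
  exact ⟨ha, hb, hc, hd⟩

/-- for `μ > μ₀`, the functions `sin((α∓γ)θ)`, `cos((α∓γ)θ)` solve the homogeneous
stability equation and are linearly independent on `[0,2L]`. -/
theorem statement15 (x0 L μ : ℝ) (hx0 : 0 < x0) (hL : 3 * x0 < L)
    (hμ : -(x0 / (L + x0)) + 2 * Real.sqrt (x0 / (L + x0)) < μ) :
    (∀ s ∈ Set.Ioo (0:ℝ) (2 * L),
        Lop x0 L μ (fun r => Real.sin ((alph x0 L μ - gamm x0 L μ) * th x0 L r)) s = 0) ∧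
    (∀ s ∈ Set.Ioo (0:ℝ) (2 * L),
        Lop x0 L μ (fun r => Real.sin ((alph x0 L μ + gamm x0 L μ) * th x0 L r)) s = 0) ∧
    (∀ s ∈ Set.Ioo (0:ℝ) (2 * L),
        Lop x0 L μ (fun r => Real.cos ((alph x0 L μ - gamm x0 L μ) * th x0 L r)) s = 0) ∧
    (∀ s ∈ Set.Ioo (0:ℝ) (2 * L),
        Lop x0 L μ (fun r => Real.cos ((alph x0 L μ + gamm x0 L μ) * th x0 L r)) s = 0) ∧
    ∀ a b c d : ℝ,
      (∀ s ∈ Set.Icc (0:ℝ) (2 * L),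
          a * Real.sin ((alph x0 L μ - gamm x0 L μ) * th x0 L s) +
            b * Real.sin ((alph x0 L μ + gamm x0 L μ) * th x0 L s) +
            c * Real.cos ((alph x0 L μ - gamm x0 L μ) * th x0 L s) +
            d * Real.cos ((alph x0 L μ + gamm x0 L μ) * th x0 L s) = 0) →
      a = 0 ∧ b = 0 ∧ c = 0 ∧ d = 0 :=
  statement15_general x0 L μ hx0 (by linarith) hμ
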